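/- Let V = ℂ[X] ⊗[ℂ] ℂ², let E, F be the operators on ℂ[X] given by F(p) = X·p, E(p) = −p′ − X·p″ (the λ = −1 Verma realization), and let e = !![0,1;0,0], f = !![0,0;1,0] act on ℂ² with standard basis u₁ = (1,0), u₋₁ = (0,1). Define K = (E∘F + F∘E) ⊗ 1 + 2(E ⊗ f + F ⊗ e) + 1 ⊗ (e·f + f·e) on V. Then for every integer k ≥ 1, the vectors w₁ = X^k ⊗ u₁ + k·X^{k-1} ⊗ u₋₁ and w₂ = X^{k-1} ⊗ u₋₁ satisfy K(w₁) = −2k²·w₁ and K(w₂) = 2·w₁ − 2k²·w₂. -/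

import Mathlib

open Polynomial TensorProduct Matrix

noncomputable section

/-- `F p = X * p` as a linear map on `ℂ[X]`. -/
def Fop : Polynomial ℂ →ₗ[ℂ] Polynomial ℂ := LinearMap.mulLeft ℂ (X : Polynomial ℂ)

/-- `E p = -p' - X * p''` (the `λ = -1` Verma realization) as a linear map. -/
def Eop : Polynomial ℂ →ₗ[ℂ] Polynomial ℂ :=
  (-1 : ℂ) • (derivative : Polynomial ℂ →ₗ[ℂ] Polynomial ℂ) -
    LinearMap.mulLeft ℂ (X : Polynomial ℂ) ∘ₗ
      (derivative : Polynomial ℂ →ₗ[ℂ] Polynomial ℂ) ∘ₗ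
        (derivative : Polynomial ℂ →ₗ[ℂ] Polynomial ℂ)

/-- the matrix `e = !![0,1;0,0]` acting on `ℂ²`. -/
def eop : (Fin 2 → ℂ) →ₗ[ℂ] (Fin 2 → ℂ) := Matrix.toLin' !![0, 1; 0, 0]

/-- the matrix `f = !![0,0;1,0]` acting on `ℂ²`. -/
def fop : (Fin 2 → ℂ) →ₗ[ℂ] (Fin 2 → ℂ) := Matrix.toLin' !![0, 0; 1, 0]

/-- The action `K = δ(κ) = κ⊗1 + 2(E⊗f + F⊗e) + 1⊗κ` on `V = ℂ[X] ⊗ ℂ²`. -/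
def K : Polynomial ℂ ⊗[ℂ] (Fin 2 → ℂ) →ₗ[ℂ] Polynomial ℂ ⊗[ℂ] (Fin 2 → ℂ) :=
  TensorProduct.map (Eop ∘ₗ Fop + Fop ∘ₗ Eop) LinearMap.id +
    (2 : ℂ) • (TensorProduct.map Eop fop + TensorProduct.map Fop eop) +
      TensorProduct.map LinearMap.id (eop ∘ₗ fop + fop ∘ₗ eop)

def u₁ : Fin 2 → ℂ := ![1, 0]
def uNeg : Fin 2 → ℂ := ![0, 1]

/-!
Put `D = d/dX`. The map `w p = p ⊗ u₁ + D p ⊗ u₋₁` satisfies `K ∘ w = w ∘ 2FE`, so it carries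
eigenvectors of `FE` to eigenvectors of `K`; the other vectors of the Jordan chains come from
`K (q ⊗ u₋₁) = 2 w (F q) + 2 EF q ⊗ u₋₁`. Both identities follow from `E = -D F D` and
`D F = F D + 1`. Finally `FE` and `EF` act on `X ^ n` by `-n²` and `-(n + 1)²`.
-/

theorem X_mul_derivative_X_pow {R : Type*} [CommSemiring R] (n : ℕ) :
    X * derivative (X ^ n : R[X]) = (n : R) • X ^ n := by
  cases n with
  | zero => simp
  | succ m => rw [derivative_X_pow, Nat.add_sub_cancel, smul_eq_C_mul, pow_succ', mul_left_comm]

theorem Fop_apply (p : ℂ[X]) : Fop p = X * p := rfl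

theorem Eop_apply (p : ℂ[X]) : Eop p = -derivative (X * derivative p) := by
  simp only [Eop, LinearMap.sub_apply, LinearMap.smul_apply, LinearMap.comp_apply,
    LinearMap.mulLeft_apply, derivative_mul, derivative_X, neg_one_smul]
  ring

theorem derivative_Fop (p : ℂ[X]) : derivative (Fop p) = Fop (derivative p) + p := by
  rw [Fop_apply, Fop_apply, derivative_mul, derivative_X, one_mul, add_comm]

theorem Eop_Fop (p : ℂ[X]) :
    Eop (Fop p) = Fop (Eop p) - (2 : ℂ) • Fop (derivative p) - p := by
  simp only [Eop_apply, Fop_apply, derivative_mul, derivative_add, derivative_X, derivative_one,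
    smul_eq_C_mul, map_ofNat]
  ring

theorem derivative_Eop (p : ℂ[X]) :
    derivative (Eop p) = Eop (derivative p) - derivative (derivative p) := by
  simp only [Eop_apply, derivative_neg, derivative_mul, derivative_add, derivative_X,
    derivative_one]
  ring

theorem Fop_Eop_X_pow (n : ℕ) : Fop (Eop (X ^ n)) = (-(n : ℂ) ^ 2) • X ^ n := by
  rw [Eop_apply, X_mul_derivative_X_pow, Fop_apply, derivative_smul, mul_neg, mul_smul_comm,
    X_mul_derivative_X_pow]
  module

theorem Eop_Fop_X_pow (n : ℕ) : Eop (Fop (X ^ n)) = (-((n : ℂ) + 1) ^ 2) • X ^ n := by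
  have cancel : Function.Injective Fop := mul_right_injective₀ X_ne_zero
  apply cancel
  rw [Fop_apply (X ^ n), ← pow_succ', Fop_Eop_X_pow, map_smul, Fop_apply, ← pow_succ']
  push_cast
  rfl

theorem eop_u₁ : eop u₁ = 0 := by
  ext i; fin_cases i <;> simp [eop, u₁]

theorem eop_uNeg : eop uNeg = u₁ := by
  ext i; fin_cases i <;> simp [eop, u₁, uNeg]

theorem fop_u₁ : fop u₁ = uNeg := by
  ext i; fin_cases i <;> simp [fop, u₁, uNeg]

theorem fop_uNeg : fop uNeg = 0 := by
  ext i; fin_cases i <;> simp [fop, uNeg]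

theorem K_tmul_u₁ (p : ℂ[X]) :
    K (p ⊗ₜ u₁) = (Eop (Fop p) + Fop (Eop p) + p) ⊗ₜ u₁ + (2 : ℂ) • (Eop p ⊗ₜ uNeg) := by
  simp only [K, LinearMap.add_apply, LinearMap.smul_apply, map_tmul, LinearMap.comp_apply,
    LinearMap.id_apply, eop_u₁, eop_uNeg, fop_u₁, map_zero, tmul_zero, add_zero, add_tmul]
  abel

theorem K_tmul_uNeg (p : ℂ[X]) :
    K (p ⊗ₜ uNeg) = (Eop (Fop p) + Fop (Eop p) + p) ⊗ₜ uNeg + (2 : ℂ) • (Fop p ⊗ₜ u₁) := by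
  simp only [K, LinearMap.add_apply, LinearMap.smul_apply, map_tmul, LinearMap.comp_apply,
    LinearMap.id_apply, eop_uNeg, fop_u₁, fop_uNeg, map_zero, tmul_zero, zero_add, add_tmul]
  abel

/-- The linear map `p ↦ p ⊗ u₁ + p' ⊗ u₋₁`, whose values on monomials are the eigenvectors of `K`
starting the Jordan chains: `X ^ k` is sent to `w₁`. -/
def jordanMap : ℂ[X] →ₗ[ℂ] ℂ[X] ⊗[ℂ] (Fin 2 → ℂ) :=
  (TensorProduct.mk ℂ ℂ[X] (Fin 2 → ℂ)).flip u₁ +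
    (TensorProduct.mk ℂ ℂ[X] (Fin 2 → ℂ)).flip uNeg ∘ₗ derivative

theorem jordanMap_apply (p : ℂ[X]) :
    jordanMap p = p ⊗ₜ u₁ + derivative p ⊗ₜ uNeg := rfl

theorem jordanMap_X_pow (n : ℕ) :
    jordanMap (X ^ n) = (X ^ n) ⊗ₜ u₁ + (n : ℂ) • ((X ^ (n - 1)) ⊗ₜ uNeg) := by
  rw [jordanMap_apply, derivative_X_pow, ← smul_eq_C_mul, smul_tmul']

theorem K_jordanMap (p : ℂ[X]) : K (jordanMap p) = (2 : ℂ) • jordanMap (Fop (Eop p)) := by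
  simp only [jordanMap_apply, map_add, K_tmul_u₁, K_tmul_uNeg, Eop_Fop, derivative_Fop,
    derivative_Eop, map_sub, add_tmul, sub_tmul, ← smul_tmul']
  module

theorem K_tmul_uNeg_eq_jordanMap (q : ℂ[X]) :
    K (q ⊗ₜ uNeg) = (2 : ℂ) • jordanMap (Fop q) + (2 : ℂ) • (Eop (Fop q) ⊗ₜ uNeg) := by
  simp only [jordanMap_apply, K_tmul_uNeg, Eop_Fop, derivative_Fop, add_tmul, sub_tmul,
    ← smul_tmul']
  module

theorem casimir_jordan_basis (k : ℕ) (hk : 1 ≤ k)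
    (w₁ w₂ : Polynomial ℂ ⊗[ℂ] (Fin 2 → ℂ))
    (hw₁ : w₁ = ((X : Polynomial ℂ) ^ k) ⊗ₜ[ℂ] u₁ +
      (k : ℂ) • (((X : Polynomial ℂ) ^ (k - 1)) ⊗ₜ[ℂ] uNeg))
    (hw₂ : w₂ = ((X : Polynomial ℂ) ^ (k - 1)) ⊗ₜ[ℂ] uNeg) :
    K w₁ = (-2 * (k : ℂ) ^ 2) • w₁ ∧
      K w₂ = (2 : ℂ) • w₁ + (-2 * (k : ℂ) ^ 2) • w₂ := by
  obtain ⟨n, rfl⟩ := Nat.exists_eq_add_of_le' hk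
  rw [← jordanMap_X_pow] at hw₁
  rw [Nat.add_sub_cancel] at hw₂
  subst hw₁ hw₂
  constructor
  · rw [K_jordanMap, Fop_Eop_X_pow, map_smul]
    module
  · rw [K_tmul_uNeg_eq_jordanMap, Eop_Fop_X_pow, Fop_apply, ← pow_succ', ← smul_tmul']
    push_cast
    module

end
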